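/- Let H ∈ (0, 1/2) and α ∈ (0, H). There exists a constant K₂ > 0 (depending only on α and H) such that for all real numbers 0 < η' ≤ η: ∫_{η+η'}^∞ f_α(ξ, η, η') dξ ≤ K₂ (η')^{2α−2H}. -/

import Mathlib

/-!
For `ξ > η + η'` put `u = ξ - η > η'`. Since `η' ≤ η`, one has `ξ > 2η'`, hence `ξ - η' ≥ ξ / 2`,
and `ξ ≥ u`. As the exponents `α - 1` and `α - 2H` are negative, the kernel is at most
`2 ^ (1 - α) * u ^ (2α - 2H - 1)` (`fKer_le`), and integrating this power over `u > η'` gives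
`2 ^ (1 - α) / (2H - 2α) * η' ^ (2α - 2H)`.
-/

open MeasureTheory intervalIntegral

/-- `f α H ξ η η' = |ξ − η|^{α−1} |ξ − η'|^{α−1} ξ^{1−2H}` if `η' ≤ η`, and `0` otherwise. -/
noncomputable def fKer (α H ξ η η' : ℝ) : ℝ :=
  if η' ≤ η then |ξ - η| ^ (α - 1) * |ξ - η'| ^ (α - 1) * ξ ^ (1 - 2*H) else 0

/-- On the region of integration the kernel is dominated by an integrable power of `ξ - η`. -/
lemma fKer_le {H α η η' ξ : ℝ} (hα₁ : 0 < α) (hα₂ : α < H) (hH₂ : H < 1/2)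
    (hη' : 0 < η') (hη : η' ≤ η) (hξ : η + η' < ξ) :
    fKer α H ξ η η' ≤ 2 ^ (1 - α) * (ξ + -η) ^ (2*α - 2*H - 1) := by
  have hu : 0 < ξ - η := by linarith
  have hv : 0 < ξ - η' := by linarith
  have hx : 0 < ξ := by linarith
  have h1 : (ξ - η') ^ (α - 1) ≤ 2 ^ (1 - α) * ξ ^ (α - 1) := by
    calc (ξ - η') ^ (α - 1) ≤ (ξ / 2) ^ (α - 1) :=
          Real.rpow_le_rpow_of_nonpos (by linarith) (by linarith) (by linarith)
      _ = 2 ^ (1 - α) * ξ ^ (α - 1) := by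
          rw [Real.div_rpow hx.le (by norm_num), show (1 - α) = -(α - 1) by ring,
            Real.rpow_neg (by norm_num)]
          ring
  have h2 : ξ ^ (α - 2*H) ≤ (ξ - η) ^ (α - 2*H) :=
    Real.rpow_le_rpow_of_nonpos hu (by linarith) (by linarith)
  rw [fKer, if_pos hη, abs_of_pos hu, abs_of_pos hv, ← sub_eq_add_neg]
  calc (ξ - η) ^ (α - 1) * (ξ - η') ^ (α - 1) * ξ ^ (1 - 2*H)
      ≤ (ξ - η) ^ (α - 1) * (2 ^ (1 - α) * ξ ^ (α - 1)) * ξ ^ (1 - 2*H) := by gcongr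
    _ = 2 ^ (1 - α) * ((ξ - η) ^ (α - 1) * ξ ^ (α - 2*H)) := by
        rw [show α - 2*H = (α - 1) + (1 - 2*H) by ring, Real.rpow_add hx]
        ring
    _ ≤ 2 ^ (1 - α) * ((ξ - η) ^ (α - 1) * (ξ - η) ^ (α - 2*H)) := by gcongr
    _ = 2 ^ (1 - α) * (ξ - η) ^ (2*α - 2*H - 1) := by
        rw [← Real.rpow_add hu]
        ring_nf

theorem stmt_9 (H α : ℝ) (hH₁ : 0 < H) (hH₂ : H < 1/2) (hα₁ : 0 < α) (hα₂ : α < H) :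
    ∃ K₂ : ℝ, 0 < K₂ ∧ ∀ η' η : ℝ, 0 < η' → η' ≤ η →
      (∫ ξ in Set.Ioi (η + η'), fKer α H ξ η η')
        ≤ K₂ * η' ^ (2*α - 2*H) := by
  have hd : 0 < 2*H - 2*α := by linarith
  refine ⟨2 ^ (1 - α) / (2*H - 2*α), by positivity, fun η' η hη' hη => ?_⟩
  have hint : IntegrableOn (fun ξ : ℝ => 2 ^ (1 - α) * (ξ + -η) ^ (2*α - 2*H - 1))
      (Set.Ioi (η + η')) :=
    (integrableOn_add_rpow_Ioi_of_lt (by linarith) (by linarith)).const_mul _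
  calc (∫ ξ in Set.Ioi (η + η'), fKer α H ξ η η')
      ≤ ∫ ξ in Set.Ioi (η + η'), 2 ^ (1 - α) * (ξ + -η) ^ (2*α - 2*H - 1) := by
        refine integral_mono_of_nonneg ?_ hint ?_
        · filter_upwards [ae_restrict_mem measurableSet_Ioi] with ξ hξ
          have hx : 0 < ξ := by linarith [Set.mem_Ioi.mp hξ]
          simp only [fKer, if_pos hη, Pi.zero_apply]
          positivity
        · filter_upwards [ae_restrict_mem measurableSet_Ioi] with ξ hξ
          exact fKer_le hα₁ hα₂ hH₂ hη' hη hξ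
    _ = 2 ^ (1 - α) * ∫ u in Set.Ioi η', u ^ (2*α - 2*H - 1) := by
        have hshift := (measurePreserving_add_right volume (-η)).setIntegral_preimage_emb
          (measurableEmbedding_addRight (-η)) (fun u : ℝ => u ^ (2*α - 2*H - 1)) (Set.Ioi η')
        rw [Set.preimage_add_const_Ioi, sub_neg_eq_add, add_comm η' η] at hshift
        rw [MeasureTheory.integral_const_mul, hshift]
    _ = 2 ^ (1 - α) / (2*H - 2*α) * η' ^ (2*α - 2*H) := by
        rw [integral_Ioi_rpow_of_lt (by linarith) hη', sub_add_cancel,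
          show 2*α - 2*H = -(2*H - 2*α) by ring, neg_div_neg_eq]
        ring
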